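/- Let n ≥ 3, f ∈ C_c^∞(ℝ^n), and β a multi-index with |β| = k ≥ 2. Then the principal value p.v. ∫_{ℝ^n} D^β Γ(x−y) f(y) dy := lim_{ε→0} ∫_{ℝ^n \ B_ε(x)} D^β Γ(x−y) f(y) dy exists for every x ∈ ℝ^n, and if supp f ⊂ B_R, it equals ∫_{B_R} D^β Γ(x−y)(f(y) − T^x_{k−2}(f)(y)) dy, where T^x_{k−2}(f) is the Taylor polynomial of f of order k−2 centered at x. -/

import Mathlib

open MeasureTheory Metric

noncomputable section

def sphArea (n : ℕ) : ℝ :=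
  (μH[(n : ℝ) - 1] (sphere (0 : EuclideanSpace ℝ (Fin n)) 1)).toReal

def fundSol (n : ℕ) (x : EuclideanSpace ℝ (Fin n)) : ℝ :=
  (1 / (n * (2 - (n : ℝ)) * sphArea n)) * ‖x‖ ^ ((2 : ℝ) - n)

def ee {n : ℕ} (i : Fin n) : EuclideanSpace ℝ (Fin n) := EuclideanSpace.single i 1

/-- The Taylor polynomial of order `k` of `f` at `x`, evaluated at `y`. -/
def taylorPoly (n k : ℕ) (f : EuclideanSpace ℝ (Fin n) → ℝ)
    (x y : EuclideanSpace ℝ (Fin n)) : ℝ :=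
  ∑ i ∈ Finset.range (k + 1),
    ((Nat.factorial i : ℝ)⁻¹) * iteratedFDeriv ℝ i f x (fun _ => y - x)

/-!
Let `d` be the dimension, `K = D^β Γ` and `l = k - 2`. The kernel `K` is homogeneous of degree
`-d - l` with the parity of `l`, and its integral over the unit sphere against any homogeneous
polynomial of degree `l` vanishes: by induction on the number of derivatives this comes from
`∫_S ∂_e g = 0` for `g` homogeneous of degree `1 - d`, the only degree for which the flux through
spheres is independent of the radius.

Let `p` be a homogeneous polynomial of degree `j ≤ l`. With `A` a primitive of `r ^ (-1 - (l - j))`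
and `ρ(θ)` the distance from the origin to `∂B(a, R)` in the direction `θ`, polar coordinates turn
`∫_{B(a, R) ∖ B_ε} K p` into `∫_S K p (A(ρ(θ)) - A(ε))`. Since `ρ(θ)` and `-ρ(-θ)` are the roots of
a quadratic equation whose coefficients are polynomials in `θ`, pairing `θ` with `-θ` replaces
`A(ρ(θ))` by a power sum of their inverses (by the logarithm of their product if `j = l`), which is
a homogeneous polynomial of degree `l - j`; so the integral vanishes. Hence the Taylor polynomial
may be subtracted from `f` outside `B_ε(x)`, and `|K| |f - T| ≤ C |z| ^ (1 - d)` gives the limit.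
-/

section HaarMeasure

open Set Filter Topology Module
open scoped Pointwise

variable {E F : Type*} [NormedAddCommGroup E] [NormedSpace ℝ E] [FiniteDimensional ℝ E]
  [MeasurableSpace E] [BorelSpace E] [NormedAddCommGroup F] [NormedSpace ℝ F]
  (μ : Measure E) [μ.IsAddHaarMeasure]

theorem integral_volumeIoiPow (n : ℕ) (h : ℝ → F) :
    ∫ r, h r ∂Measure.volumeIoiPow n = ∫ r in Ioi (0 : ℝ), r ^ n • h r := by
  have hmeas : Measurable fun r : Ioi (0 : ℝ) ↦ (r.1 ^ n).toNNReal :=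
    (measurable_subtype_coe.pow_const _).real_toNNReal
  rw [Measure.volumeIoiPow]
  simp only [ENNReal.ofReal]
  rw [integral_withDensity_eq_integral_smul hmeas,
    integral_subtype_comap measurableSet_Ioi fun r : ℝ ↦ (r ^ n).toNNReal • h r]
  refine setIntegral_congr_fun measurableSet_Ioi fun r hr ↦ ?_
  simp only [NNReal.smul_def, Real.coe_toNNReal _ (pow_nonneg (le_of_lt hr) n)]

theorem integral_eq_integral_toSphere_integral_Ioi [Nontrivial E] {g : E → F}
    (hg : Integrable g μ) :
    ∫ z, g z ∂μ = ∫ θ : sphere (0 : E) 1,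
      (∫ r in Ioi (0 : ℝ), r ^ (finrank ℝ E - 1) • g (r • (θ : E))) ∂μ.toSphere := by
  have hpolar := μ.measurePreserving_homeomorphUnitSphereProd
  have hemb := (homeomorphUnitSphereProd E).measurableEmbedding
  let G : sphere (0 : E) 1 × Ioi (0 : ℝ) → F := fun p ↦ g (p.2.1 • p.1.1)
  have hG : ∀ z : ({0}ᶜ : Set E), G (homeomorphUnitSphereProd E z) = g z := fun z ↦ by
    have hz : (z : E) ≠ 0 := z.2
    simp [G, smul_smul, hz]
  have hGint : Integrable G (μ.toSphere.prod (.volumeIoiPow (finrank ℝ E - 1))) := by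
    rw [← hpolar.integrable_comp_emb hemb, funext hG (f := G ∘ homeomorphUnitSphereProd E)]
    exact (integrableOn_iff_comap_subtypeVal (measurableSet_singleton _).compl).1 hg.integrableOn
  calc ∫ z, g z ∂μ = ∫ z : ({0}ᶜ : Set E), g z ∂μ.comap Subtype.val := by
        rw [integral_subtype_comap (measurableSet_singleton _).compl g, restrict_compl_singleton]
    _ = ∫ p, G p ∂μ.toSphere.prod (.volumeIoiPow (finrank ℝ E - 1)) := by
        rw [← hpolar.integral_comp hemb]
        simp only [hG]
    _ = _ := by
        rw [integral_prod _ hGint]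
        exact integral_congr_ae (.of_forall fun θ ↦ integral_volumeIoiPow _ fun r ↦ g (r • (θ : E)))

theorem measurePreserving_neg_toSphere :
    MeasurePreserving (fun θ : sphere (0 : E) 1 ↦ -θ) μ.toSphere μ.toSphere := by
  have hmeas : Measurable fun θ : sphere (0 : E) 1 ↦ -θ := continuous_neg.measurable
  refine ⟨hmeas, Measure.ext fun s hs ↦ ?_⟩
  have hcone : Ioo (0 : ℝ) 1 • ((↑) '' ((fun θ : sphere (0 : E) 1 ↦ -θ) ⁻¹' s) : Set E) =
      -(Ioo (0 : ℝ) 1 • ((↑) '' s : Set E)) := by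
    rw [← Set.smul_neg]
    congr 1
    ext z
    constructor
    · rintro ⟨θ, hθ, rfl⟩
      exact ⟨-θ, hθ, by simp⟩
    · rintro ⟨θ, hθ, hz⟩
      exact ⟨-θ, by simpa using hθ, by simp [hz]⟩
  rw [Measure.map_apply hmeas hs, μ.toSphere_apply' hs, μ.toSphere_apply' (hmeas hs), hcone,
    Measure.measure_neg]

theorem integral_toSphere_comp_neg (h : sphere (0 : E) 1 → F) :
    ∫ θ, h (-θ) ∂μ.toSphere = ∫ θ, h θ ∂μ.toSphere :=
  (measurePreserving_neg_toSphere μ).integral_comp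
    (Homeomorph.neg (sphere (0 : E) 1)).measurableEmbedding h

theorem integral_fderiv_apply_eq_zero {h : E → F} (hh : ContDiff ℝ 1 h)
    (hc : HasCompactSupport h) (e : E) : ∫ z, fderiv ℝ h z e ∂μ = 0 := by
  have hderiv : Integrable (fun z ↦ fderiv ℝ h z e) μ :=
    ((hh.continuous_fderiv one_ne_zero).clm_apply continuous_const).integrable_of_hasCompactSupport
      (hc.fderiv_apply ℝ e)
  have hint : Integrable h μ := hh.continuous.integrable_of_hasCompactSupport hc
  simpa using integral_smul_fderiv_eq_neg_fderiv_smul_of_integrable (μ := μ)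
    (f := fun _ : E ↦ (1 : ℝ)) (g := h) (v := e) (by simp) (by simpa using hderiv)
    (by simpa using hint) (by simp) fun z _ ↦ hh.differentiable one_ne_zero z

end HaarMeasure

section Flux

open Set Filter Topology Module

variable {E F : Type*} [NormedAddCommGroup E] [NormedAddCommGroup F] [NormedSpace ℝ F]

theorem smul_fderiv_smul_of_eventuallyEq [NormedSpace ℝ E] {g : E → F} {c t : ℝ} {z : E}
    (h : (fun w ↦ g (t • w)) =ᶠ[𝓝 z] fun w ↦ c • g w) :
    t • fderiv ℝ g (t • z) = c • fderiv ℝ g z := by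
  rw [← fderiv_comp_smul, h.fderiv_eq]
  exact congrFun (fderiv_const_smul_field c) z

variable {φ : ℝ → ℝ} {g : E → F}

theorem hasCompactSupport_comp_norm_smul [ProperSpace E] (hφ : HasCompactSupport φ) :
    HasCompactSupport fun z : E ↦ φ ‖z‖ • g z := by
  obtain ⟨R, hR⟩ := hφ.isCompact.isBounded.subset_closedBall 0
  refine HasCompactSupport.intro (isCompact_closedBall (0 : E) R) fun z hz ↦ ?_
  have hφz : φ ‖z‖ = 0 := image_eq_zero_of_notMem_tsupport fun h ↦ hz (by simpa using hR h)
  rw [hφz, zero_smul]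

theorem continuous_mul_inv_of_tsupport_subset_Ioi (hφ : Continuous φ)
    (hφ0 : tsupport φ ⊆ Ioi 0) : Continuous fun r ↦ φ r * r⁻¹ :=
  continuous_of_tsupport fun _ hr ↦ hφ.continuousAt.mul <| continuousAt_inv₀
    (hφ0 (tsupport_mul_subset_left hr)).ne'

variable [InnerProductSpace ℝ E]

theorem contDiff_comp_norm_smul {n : WithTop ℕ∞} (hφ : ContDiff ℝ n φ)
    (hφ0 : tsupport φ ⊆ Ioi 0) (hg : ContDiffOn ℝ n g {0}ᶜ) :
    ContDiff ℝ n fun z ↦ φ ‖z‖ • g z := by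
  refine contDiff_iff_contDiffAt.2 fun z ↦ ?_
  rcases eq_or_ne z 0 with rfl | hz
  · have hφ_zero : φ =ᶠ[𝓝 ‖(0 : E)‖] 0 := by
      rw [norm_zero, ← notMem_tsupport_iff_eventuallyEq]
      exact fun h ↦ lt_irrefl (0 : ℝ) (hφ0 h)
    refine contDiffAt_const (c := (0 : F)).congr_of_eventuallyEq ?_
    filter_upwards [continuous_norm.continuousAt.eventually hφ_zero] with w hw
    simp [hw]
  · exact (hφ.contDiffAt.comp z (contDiffAt_norm ℝ hz)).smul
      (hg.contDiffAt (isOpen_ne.mem_nhds hz))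

theorem pow_smul_fderiv_comp_norm_smul [FiniteDimensional ℝ E] [Nontrivial E]
    (hφ : Differentiable ℝ φ) (hg : DifferentiableOn ℝ g {0}ᶜ)
    (hom : ∀ t : ℝ, 0 < t → ∀ z ≠ 0, g (t • z) = t ^ (1 - finrank ℝ E : ℤ) • g z)
    {r : ℝ} (hr : 0 < r) {u : E} (hu : ‖u‖ = 1) (e : E) :
    r ^ (finrank ℝ E - 1) • fderiv ℝ (fun z ↦ φ ‖z‖ • g z) (r • u) e =
      (φ r * r⁻¹) • fderiv ℝ g u e + deriv φ r • fderiv ℝ (‖·‖) u e • g u := by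
  have hu0 : u ≠ 0 := norm_ne_zero_iff.1 (hu ▸ one_ne_zero)
  have hru : ‖r • u‖ = r := by rw [norm_smul, hu, mul_one, Real.norm_of_nonneg hr.le]
  have hz : r • u ≠ 0 := smul_ne_zero hr.ne' hu0
  have hnorm : HasFDerivAt (fun z : E ↦ ‖z‖) (fderiv ℝ (‖·‖) u) (r • u) := by
    rw [← fderiv_norm_smul_pos hr]
    exact ((contDiffAt_norm ℝ (n := 1) hz).differentiableAt one_ne_zero).hasFDerivAt
  have hφr : HasDerivAt φ (deriv φ r) ‖r • u‖ := hru.symm ▸ (hφ r).hasDerivAt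
  have hproduct := ((hφr.comp_hasFDerivAt _ hnorm).smul
    ((hg.differentiableAt (isOpen_ne.mem_nhds hz)).hasFDerivAt)).fderiv
  have hg' : r • fderiv ℝ g (r • u) = r ^ (1 - finrank ℝ E : ℤ) • fderiv ℝ g u :=
    smul_fderiv_smul_of_eventuallyEq <| by
      filter_upwards [isOpen_ne.mem_nhds hu0] with w hw using hom r hr w hw
  have hpow : r ^ (finrank ℝ E - 1) * r ^ (1 - finrank ℝ E : ℤ) = 1 := by
    have := finrank_pos (R := ℝ) (M := E)
    rw [← zpow_natCast, ← zpow_add₀ hr.ne', ← zpow_zero r]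
    congr 1
    omega
  have hg'' : r ^ (finrank ℝ E - 1) • fderiv ℝ g (r • u) e = r⁻¹ • fderiv ℝ g u e := by
    rw [← inv_smul_smul₀ hr.ne' (fderiv ℝ g (r • u)), hg']
    simp only [FunLike.coe_smul, Pi.smul_apply, smul_smul]
    rw [mul_left_comm, hpow, mul_one]
  have hpow' : r ^ (finrank ℝ E - 1) • g (r • u) = g u := by
    rw [hom r hr u hu0, smul_smul, hpow, one_smul]
  have happly := congrArg (fun L : E →L[ℝ] F ↦ L e) hproduct
  simp only [Function.comp_apply, hru] at happly
  rw [show fderiv ℝ (fun z ↦ φ ‖z‖ • g z) (r • u) e = φ r • fderiv ℝ g (r • u) e +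
    (deriv φ r * fderiv ℝ (‖·‖) u e) • g (r • u) from happly, smul_add, smul_comm _ (φ r), hg'',
    smul_comm _ (_ * _), hpow', smul_smul, smul_smul]

variable [FiniteDimensional ℝ E] [Nontrivial E] [MeasurableSpace E] [BorelSpace E]
  (μ : Measure E) [μ.IsAddHaarMeasure]

theorem integral_smul_integral_toSphere_fderiv_apply_eq_zero [CompleteSpace F]
    (hφ : ContDiff ℝ 1 φ) (hφc : HasCompactSupport φ) (hφ0 : tsupport φ ⊆ Ioi 0)
    (hg : ContDiffOn ℝ 1 g {0}ᶜ)
    (hom : ∀ t : ℝ, 0 < t → ∀ z ≠ 0, g (t • z) = t ^ (1 - finrank ℝ E : ℤ) • g z) (e : E) :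
    (∫ r in Ioi 0, φ r * r⁻¹) • ∫ θ : sphere (0 : E) 1, fderiv ℝ g θ e ∂μ.toSphere = 0 := by
  have hh : ContDiff ℝ 1 fun z ↦ φ ‖z‖ • g z := contDiff_comp_norm_smul hφ hφ0 hg
  have hhc : HasCompactSupport fun z ↦ φ ‖z‖ • g z := hasCompactSupport_comp_norm_smul hφc
  have hh' : Integrable (fun z ↦ fderiv ℝ (fun z ↦ φ ‖z‖ • g z) z e) μ :=
    ((hh.continuous_fderiv one_ne_zero).clm_apply continuous_const).integrable_of_hasCompactSupport
      (hhc.fderiv_apply ℝ e)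
  have hφ_deriv : IntegrableOn (deriv φ) (Ioi 0) :=
    ((hφ.continuous_deriv le_rfl).integrable_of_hasCompactSupport hφc.deriv).integrableOn
  have hφ_inv : IntegrableOn (fun r ↦ φ r * r⁻¹) (Ioi 0) :=
    ((continuous_mul_inv_of_tsupport_subset_Ioi hφ.continuous hφ0).integrable_of_hasCompactSupport
      hφc.mul_right).integrableOn
  have hderiv_zero : ∫ r in Ioi 0, deriv φ r = 0 := by
    rw [hφc.integral_Ioi_deriv_eq hφ, neg_eq_zero]
    exact image_eq_zero_of_notMem_tsupport fun h ↦ lt_irrefl (0 : ℝ) (hφ0 h)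
  have hradial (θ : sphere (0 : E) 1) : ∫ r in Ioi (0 : ℝ), r ^ (finrank ℝ E - 1) •
      fderiv ℝ (fun z ↦ φ ‖z‖ • g z) (r • (θ : E)) e =
      (∫ r in Ioi 0, φ r * r⁻¹) • fderiv ℝ g θ e := by
    rw [setIntegral_congr_fun measurableSet_Ioi fun r hr ↦ pow_smul_fderiv_comp_norm_smul
      (hφ.differentiable one_ne_zero) (hg.differentiableOn one_ne_zero) hom hr
      (norm_eq_of_mem_sphere θ) e, integral_add (hφ_inv.smul_const _) (hφ_deriv.smul_const _),
      integral_smul_const, integral_smul_const, hderiv_zero, zero_smul, add_zero]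
  rw [← integral_smul, ← integral_fderiv_apply_eq_zero μ hh hhc e,
    integral_eq_integral_toSphere_integral_Ioi μ hh']
  simp only [hradial]

theorem integral_toSphere_fderiv_apply_eq_zero [CompleteSpace F] (hg : ContDiffOn ℝ 1 g {0}ᶜ)
    (hom : ∀ t : ℝ, 0 < t → ∀ z ≠ 0, g (t • z) = t ^ (1 - finrank ℝ E : ℤ) • g z) (e : E) :
    ∫ θ : sphere (0 : E) 1, fderiv ℝ g θ e ∂μ.toSphere = 0 := by
  let φ : ContDiffBump (2 : ℝ) := ⟨1 / 2, 1, by norm_num, by norm_num⟩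
  have hφ0 : tsupport φ ⊆ Ioi 0 := by
    rw [φ.tsupport_eq, Real.closedBall_eq_Icc]
    exact fun r hr ↦ zero_lt_one.trans_le (by norm_num [φ] at hr; exact hr.1)
  have hφ_zero (r : ℝ) (hr : r ≤ 0) : φ r = 0 :=
    image_eq_zero_of_notMem_tsupport fun h ↦ hr.not_gt (hφ0 h)
  have hpos : 0 < ∫ r in Ioi 0, φ r * r⁻¹ := by
    rw [setIntegral_eq_integral_of_forall_compl_eq_zero fun r hr ↦ by
      rw [hφ_zero r (not_lt.1 hr), zero_mul]]
    refine (continuous_mul_inv_of_tsupport_subset_Ioi φ.continuous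
      hφ0).integral_pos_of_hasCompactSupport_nonneg_nonzero φ.hasCompactSupport.mul_right
      (fun r ↦ ?_) (x := 2) (by simp [φ.one_of_mem_closedBall (mem_closedBall_self φ.rIn_pos.le)])
    rcases le_total r 0 with hr | hr
    · simp [hφ_zero r hr]
    · exact mul_nonneg φ.nonneg (inv_nonneg.2 hr)
  exact (smul_eq_zero.1 <| integral_smul_integral_toSphere_fderiv_apply_eq_zero μ φ.contDiff
    φ.hasCompactSupport hφ0 hg hom e).resolve_left hpos.ne'

end Flux

section Homogeneity

open Set Filter Topology Module
open scoped ContDiff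

section SmoothHomogeneous

variable {E : Type*} [NormedAddCommGroup E] [NormedSpace ℝ E]

/-- Homogeneous polynomials of degree `j`, encoded as the functions that are `C^∞` on the whole
space, origin included, and homogeneous of degree `j` for all real scalars. -/
structure SmoothHomogeneous (j : ℕ) (q : E → ℝ) : Prop where
  contDiff : ContDiff ℝ ∞ q
  map_smul (t : ℝ) (z : E) : q (t • z) = t ^ j * q z

namespace SmoothHomogeneous

variable {i j : ℕ} {p q : E → ℝ}

theorem const (c : ℝ) : SmoothHomogeneous 0 fun _ : E ↦ c :=
  ⟨contDiff_const, by simp⟩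

theorem mul (hp : SmoothHomogeneous i p) (hq : SmoothHomogeneous j q) :
    SmoothHomogeneous (i + j) fun z ↦ p z * q z :=
  ⟨hp.contDiff.mul hq.contDiff, fun t z ↦ by rw [hp.map_smul, hq.map_smul]; ring⟩

theorem const_mul (hp : SmoothHomogeneous j p) (c : ℝ) : SmoothHomogeneous j fun z ↦ c * p z := by
  simpa only [zero_add] using (const c).mul hp

theorem add (hp : SmoothHomogeneous j p) (hq : SmoothHomogeneous j q) :
    SmoothHomogeneous j fun z ↦ p z + q z :=
  ⟨hp.contDiff.add hq.contDiff, fun t z ↦ by rw [hp.map_smul, hq.map_smul]; ring⟩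

theorem continuousMultilinearMap_diag (M : ContinuousMultilinearMap ℝ (fun _ : Fin j ↦ E) ℝ) :
    SmoothHomogeneous j fun z ↦ M fun _ ↦ z :=
  ⟨M.contDiff.comp (contDiff_pi.2 fun _ ↦ contDiff_id), fun t z ↦ by
    simpa using M.map_smul_univ (fun _ ↦ t) fun _ ↦ z⟩

theorem eq_apply_zero (hq : SmoothHomogeneous 0 q) (z : E) : q z = q 0 := by
  simpa using (hq.map_smul 0 z).symm

theorem fderiv_apply (hq : SmoothHomogeneous (j + 1) q) (e : E) :
    SmoothHomogeneous j fun z ↦ fderiv ℝ q z e := by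
  refine ⟨(hq.contDiff.fderiv_right (by simp)).clm_apply contDiff_const, fun t z ↦ ?_⟩
  have hcont : Continuous fun z ↦ fderiv ℝ q z e :=
    (hq.contDiff.continuous_fderiv (by simp)).clm_apply continuous_const
  refine congrFun (Continuous.ext_on (dense_compl_singleton (0 : ℝ))
    (hcont.comp (continuous_id.smul continuous_const))
    ((continuous_pow j).mul continuous_const) fun t ht ↦ ?_) t
  have h := smul_fderiv_smul_of_eventuallyEq (z := z) (.of_forall fun w ↦ hq.map_smul t w)
  have h_e := congrArg (fun L : E →L[ℝ] ℝ ↦ L e) h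
  simp only [FunLike.coe_smul, Pi.smul_apply, smul_eq_mul, pow_succ', mul_assoc] at h_e
  exact mul_left_cancel₀ ht h_e

end SmoothHomogeneous

end SmoothHomogeneous

theorem smoothHomogeneous_inner {E : Type*} [NormedAddCommGroup E] [InnerProductSpace ℝ E] (a : E) :
    SmoothHomogeneous 1 fun z : E ↦ inner ℝ a z :=
  ⟨contDiff_const.inner ℝ contDiff_id, fun t z ↦ by rw [inner_smul_right, pow_one]⟩

theorem smoothHomogeneous_norm_sq {E : Type*} [NormedAddCommGroup E] [InnerProductSpace ℝ E] :
    SmoothHomogeneous 2 fun z : E ↦ ‖z‖ ^ 2 :=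
  ⟨contDiff_norm_sq ℝ, fun t z ↦ by rw [norm_smul, mul_pow, Real.norm_eq_abs, sq_abs]⟩

section IsHomogeneousKernel

variable {E : Type*} [NormedAddCommGroup E] [NormedSpace ℝ E]

/-- Kernels on `E ∖ {0}` that are homogeneous of degree `j - dim E` and have the parity of `j`; both
properties are encoded by allowing negative scalars. -/
def IsHomogeneousKernel (j : ℤ) (K : E → ℝ) : Prop :=
  ∀ t : ℝ, t ≠ 0 → ∀ z ≠ 0, K (t • z) = (|t| ^ finrank ℝ E)⁻¹ * t ^ j * K z

namespace IsHomogeneousKernel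

variable {j : ℤ} {K : E → ℝ}

theorem map_smul_of_pos (hK : IsHomogeneousKernel j K) {t : ℝ} (ht : 0 < t) {z : E} (hz : z ≠ 0) :
    K (t • z) = t ^ (j - finrank ℝ E) * K z := by
  rw [hK t ht.ne' z hz, abs_of_pos ht, zpow_sub₀ ht.ne', zpow_natCast, inv_mul_eq_div]

theorem map_neg (hK : IsHomogeneousKernel j K) {z : E} (hz : z ≠ 0) :
    K (-z) = (-1) ^ j * K z := by
  simpa using hK (-1) (by norm_num) z hz

theorem mul {i : ℕ} {q : E → ℝ} (hK : IsHomogeneousKernel j K) (hq : SmoothHomogeneous i q) :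
    IsHomogeneousKernel (j + i) fun z ↦ K z * q z := fun t ht z hz ↦ by
  simp only [hK t ht z hz, hq.map_smul, zpow_add₀ ht, zpow_natCast]
  ring

theorem fderiv_apply (hK : IsHomogeneousKernel j K) (e : E) :
    IsHomogeneousKernel (j - 1) fun z ↦ fderiv ℝ K z e := fun t ht z hz ↦ by
  have h : t • fderiv ℝ K (t • z) = ((|t| ^ finrank ℝ E)⁻¹ * t ^ j) • fderiv ℝ K z :=
    smul_fderiv_smul_of_eventuallyEq <| by
      filter_upwards [isOpen_ne.mem_nhds hz] with w hw using hK t ht w hw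
  have h_e := congrArg (fun L : E →L[ℝ] ℝ ↦ L e) h
  simp only [FunLike.coe_smul, Pi.smul_apply, smul_eq_mul] at h_e
  rw [zpow_sub_one₀ ht, ← mul_assoc, mul_right_comm, ← h_e, mul_comm t, mul_inv_cancel_right₀ ht]

theorem congr {K' : E → ℝ} (hK : IsHomogeneousKernel j K) (h : EqOn K K' {0}ᶜ) :
    IsHomogeneousKernel j K' := fun t ht z hz ↦ by
  rw [← h (smul_ne_zero ht hz), ← h hz, hK t ht z hz]

end IsHomogeneousKernel

theorem contDiffOn_iteratedFDeriv_apply {F : Type*} [NormedAddCommGroup F] [NormedSpace ℝ F]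
    {g : E → F} {U : Set E} {m n : WithTop ℕ∞} {k : ℕ} (hU : IsOpen U) (hg : ContDiffOn ℝ n g U)
    (hmn : m + k ≤ n) (v : Fin k → E) : ContDiffOn ℝ m (fun z ↦ iteratedFDeriv ℝ k g z v) U :=
  fun _ hz ↦ ((ContinuousMultilinearMap.apply ℝ (fun _ : Fin k ↦ E) F v).contDiff.contDiffAt.comp _
    ((hg.contDiffAt (hU.mem_nhds hz)).iteratedFDeriv_right hmn)).contDiffWithinAt

theorem eqOn_fderiv_iteratedFDeriv_apply {F : Type*} [NormedAddCommGroup F] [NormedSpace ℝ F]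
    {g : E → F} {U : Set E} {k : ℕ} (hU : IsOpen U) (hg : ContDiffOn ℝ (k + 1 : ℕ) g U)
    (v : Fin (k + 1) → E) : EqOn (fun z ↦ fderiv ℝ (fun w ↦ iteratedFDeriv ℝ k g w (Fin.tail v)) z
      (v 0)) (fun z ↦ iteratedFDeriv ℝ (k + 1) g z v) U := fun _ hz ↦
  (DifferentiableAt.iteratedFDeriv_succ_apply_left'
    ((hg.contDiffAt (hU.mem_nhds hz)).differentiableAt_iteratedFDeriv
      (by exact_mod_cast Nat.lt_succ_self k))).symm

theorem IsHomogeneousKernel.iteratedFDeriv_apply {j : ℤ} {K : E → ℝ} {k : ℕ}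
    (hK : IsHomogeneousKernel j K) (hK' : ContDiffOn ℝ k K {0}ᶜ) (v : Fin k → E) :
    IsHomogeneousKernel (j - k) fun z ↦ iteratedFDeriv ℝ k K z v := by
  induction k with
  | zero => simpa using hK
  | succ k ih =>
    have ihK := ih (hK'.of_le (by exact_mod_cast k.le_succ)) (Fin.tail v)
    rw [Nat.cast_succ, ← sub_sub]
    exact (ihK.fderiv_apply (v 0)).congr (eqOn_fderiv_iteratedFDeriv_apply isOpen_ne hK' v)

end IsHomogeneousKernel

theorem IsHomogeneousKernel.exists_norm_le {E : Type*} [NormedAddCommGroup E] [NormedSpace ℝ E]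
    [FiniteDimensional ℝ E] {j : ℤ} {K : E → ℝ} (hK : IsHomogeneousKernel j K)
    (hKc : ContinuousOn K {0}ᶜ) : ∃ C, 0 ≤ C ∧ ∀ z ≠ 0, ‖K z‖ ≤ C * ‖z‖ ^ (j - finrank ℝ E) := by
  obtain ⟨C, hC⟩ := (isCompact_sphere (0 : E) 1).exists_bound_of_continuousOn
    (hKc.mono fun z hz ↦ ne_of_mem_sphere hz one_ne_zero)
  refine ⟨max C 0, le_max_right _ _, fun z hz ↦ ?_⟩
  have hz_pos : 0 < ‖z‖ := norm_pos_iff.2 hz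
  have hpolar := hK.map_smul_of_pos hz_pos (smul_ne_zero (inv_ne_zero hz_pos.ne') hz)
  rw [smul_inv_smul₀ hz_pos.ne'] at hpolar
  rw [hpolar, norm_mul, Real.norm_of_nonneg (zpow_nonneg hz_pos.le _), mul_comm]
  gcongr
  exact (hC _ (by simpa using norm_smul_inv_norm (𝕜 := ℝ) hz)).trans (le_max_left _ _)

end Homogeneity

section Hypersingular

open Set Filter Topology Module

variable {E : Type*} [NormedAddCommGroup E] [InnerProductSpace ℝ E] [FiniteDimensional ℝ E]
  [MeasurableSpace E] [BorelSpace E]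

/-- Hypersingular kernels of order `l`: homogeneous of degree `-dim E - l` with the parity of `l`,
and orthogonal on the unit sphere to the homogeneous polynomials of degree `l`. Those of order `0`
are the even Calderón–Zygmund kernels. -/
structure IsHypersingularKernel (l : ℕ) (K : E → ℝ) : Prop where
  continuousOn : ContinuousOn K {0}ᶜ
  homogeneous : IsHomogeneousKernel (-l) K
  integral_sphere_mul (q : E → ℝ) (hq : SmoothHomogeneous l q) :
    ∫ θ : sphere (0 : E) 1, K θ * q θ ∂(volume : Measure E).toSphere = 0

theorem integrable_toSphere_of_continuousOn {F : Type*} [NormedAddCommGroup F] {g : E → F}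
    (hg : ContinuousOn g {0}ᶜ) :
    Integrable (fun θ : sphere (0 : E) 1 ↦ g θ) (volume : Measure E).toSphere :=
  Continuous.integrable_of_hasCompactSupport
    (hg.comp_continuous continuous_subtype_val fun θ ↦ ne_of_mem_sphere θ.2 one_ne_zero)
    (.of_compactSpace _)

namespace IsHypersingularKernel

variable {K : E → ℝ} {l : ℕ}

theorem congr {K' : E → ℝ} (hK : IsHypersingularKernel l K) (h : EqOn K K' {0}ᶜ) :
    IsHypersingularKernel l K' where
  continuousOn := hK.continuousOn.congr h.symm
  homogeneous := hK.homogeneous.congr h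
  integral_sphere_mul q hq := by
    simp only [← h (ne_of_mem_sphere (Subtype.prop _) one_ne_zero), hK.integral_sphere_mul q hq]

theorem mul {j : ℕ} {p : E → ℝ} (hK : IsHypersingularKernel (l + j) K)
    (hp : SmoothHomogeneous j p) : IsHypersingularKernel l fun z ↦ K z * p z where
  continuousOn := hK.continuousOn.mul hp.contDiff.continuous.continuousOn
  homogeneous := by simpa using hK.homogeneous.mul hp
  integral_sphere_mul q hq := by
    simp only [mul_assoc]
    exact hK.integral_sphere_mul _ (add_comm j l ▸ hp.mul hq)

theorem comp_neg (hK : IsHypersingularKernel l K) : IsHypersingularKernel l fun z ↦ K (-z) :=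
  (hK.mul (j := 0) (.const ((-1) ^ (-l : ℤ)))).congr fun z hz ↦ by
    rw [hK.homogeneous.map_neg hz, mul_comm]

variable [Nontrivial E]

theorem fderiv_apply_of_isHomogeneousKernel_one {g : E → ℝ} (hg : ContDiffOn ℝ 1 g {0}ᶜ)
    (hom : IsHomogeneousKernel 1 g) (e : E) : IsHypersingularKernel 0 fun z ↦ fderiv ℝ g z e where
  continuousOn := (hg.continuousOn_fderiv_of_isOpen isOpen_ne le_rfl).clm_apply continuousOn_const
  homogeneous := by simpa using hom.fderiv_apply e
  integral_sphere_mul q hq := by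
    simp only [hq.eq_apply_zero]
    rw [integral_mul_const, integral_toSphere_fderiv_apply_eq_zero volume hg
      (fun t ht z hz ↦ hom.map_smul_of_pos ht hz) e, zero_mul]

theorem fderiv_apply (hK : IsHypersingularKernel l K) (hK' : ContDiffOn ℝ 1 K {0}ᶜ) (e : E) :
    IsHypersingularKernel (l + 1) fun z ↦ fderiv ℝ K z e where
  continuousOn := (hK'.continuousOn_fderiv_of_isOpen isOpen_ne le_rfl).clm_apply continuousOn_const
  homogeneous := by
    have h := hK.homogeneous.fderiv_apply e
    rwa [show (-l - 1 : ℤ) = -(l + 1 : ℕ) by push_cast; ring] at h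
  integral_sphere_mul q hq := by
    have hq' := hq.fderiv_apply e
    have hq_one : ContDiff ℝ 1 q := hq.contDiff.of_le (by simp)
    have hom : IsHomogeneousKernel 1 fun z ↦ K z * q z := by
      simpa using hK.homogeneous.mul hq
    have hflux := integral_toSphere_fderiv_apply_eq_zero volume (hK'.mul hq_one.contDiffOn)
      (fun t ht z hz ↦ hom.map_smul_of_pos ht hz) e
    have hproduct (θ : sphere (0 : E) 1) : fderiv ℝ (fun z ↦ K z * q z) θ e =
        K θ * fderiv ℝ q θ e + fderiv ℝ K θ e * q θ := by
      have hθ : {0}ᶜ ∈ 𝓝 (θ : E) := isOpen_ne.mem_nhds (ne_of_mem_sphere θ.2 one_ne_zero)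
      rw [fderiv_fun_mul ((hK'.differentiableOn one_ne_zero).differentiableAt hθ)
        (hq_one.differentiable one_ne_zero _)]
      simp [mul_comm]
    have hKq : ContinuousOn (fun z ↦ fderiv ℝ K z e * q z) {0}ᶜ :=
      ((hK'.continuousOn_fderiv_of_isOpen isOpen_ne le_rfl).clm_apply continuousOn_const).mul
        hq.contDiff.continuous.continuousOn
    have hKq' : ContinuousOn (fun z ↦ K z * fderiv ℝ q z e) {0}ᶜ :=
      hK.continuousOn.mul hq'.contDiff.continuous.continuousOn
    simp only [hproduct] at hflux
    rwa [integral_add (integrable_toSphere_of_continuousOn hKq')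
      (integrable_toSphere_of_continuousOn hKq), hK.integral_sphere_mul _ hq', zero_add] at hflux

theorem iteratedFDeriv_apply {Γ : E → ℝ} {s k : ℕ} (hs : 1 ≤ s) (hsk : s ≤ k)
    (hΓ : IsHomogeneousKernel s Γ) (hΓ' : ContDiffOn ℝ k Γ {0}ᶜ) (v : Fin k → E) :
    IsHypersingularKernel (k - s) fun z ↦ iteratedFDeriv ℝ k Γ z v := by
  induction k, hsk using Nat.le_induction with
  | base =>
    obtain ⟨s, rfl⟩ := Nat.exists_eq_add_of_le' hs
    have hom := hΓ.iteratedFDeriv_apply (hΓ'.of_le (by exact_mod_cast s.le_succ)) (Fin.tail v)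
    rw [Nat.cast_succ, add_sub_cancel_left] at hom
    rw [Nat.sub_self]
    exact (fderiv_apply_of_isHomogeneousKernel_one
      (contDiffOn_iteratedFDeriv_apply isOpen_ne hΓ' (by simp [add_comm]) _) hom (v 0)).congr
      (eqOn_fderiv_iteratedFDeriv_apply isOpen_ne hΓ' v)
  | succ k hsk ih =>
    rw [Nat.succ_sub hsk]
    exact ((ih (hΓ'.of_le (by exact_mod_cast k.le_succ)) (Fin.tail v)).fderiv_apply
      (contDiffOn_iteratedFDeriv_apply isOpen_ne hΓ' (by simp [add_comm]) _) (v 0)).congr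
      (eqOn_fderiv_iteratedFDeriv_apply isOpen_ne hΓ' v)

end IsHypersingularKernel

end Hypersingular

section ExitRadius

open Set Filter Topology Module

theorem sq_sub_norm_sq_pos {E : Type*} [SeminormedAddCommGroup E] {a : E} {R : ℝ} (ha : ‖a‖ < R) :
    0 < R ^ 2 - ‖a‖ ^ 2 :=
  sub_pos.2 (pow_lt_pow_left₀ ha (norm_nonneg a) two_ne_zero)

theorem norm_lt_of_ball_zero_subset_ball {E : Type*} [SeminormedAddCommGroup E] {a : E} {R ε : ℝ}
    (hε : 0 < ε) (hsub : ball 0 ε ⊆ ball a R) : ‖a‖ < R := by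
  simpa using hsub (mem_ball_self hε)

variable {E : Type*} [NormedAddCommGroup E] [InnerProductSpace ℝ E] {a u : E} {R : ℝ}

/-- The distance from the origin to the sphere of radius `R` about `a` in the direction of the unit
vector `u`, for `‖a‖ < R`: the positive root `r` of `‖r • u - a‖ ^ 2 = R ^ 2`. The other root is
`-exitRadius a R (-u)`. -/
def exitRadius (a : E) (R : ℝ) (u : E) : ℝ :=
  inner ℝ a u + √(inner ℝ a u ^ 2 + (R ^ 2 - ‖a‖ ^ 2))

theorem exitRadius_pos (ha : ‖a‖ < R) (u : E) : 0 < exitRadius a R u := by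
  have habs : |inner ℝ a u| < √(inner ℝ a u ^ 2 + (R ^ 2 - ‖a‖ ^ 2)) := by
    rw [← Real.sqrt_sq_eq_abs]
    exact Real.sqrt_lt_sqrt (sq_nonneg _) (lt_add_of_pos_right _ (sq_sub_norm_sq_pos ha))
  exact neg_lt_iff_pos_add.1 (abs_lt.1 habs).1

theorem continuous_exitRadius : Continuous (exitRadius a R) := by
  unfold exitRadius
  fun_prop

theorem exitRadius_zero_left (hR : 0 ≤ R) (u : E) : exitRadius 0 R u = R := by
  simp [exitRadius, Real.sqrt_sq hR]

theorem exitRadius_sub_exitRadius_neg (a : E) (R : ℝ) (u : E) :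
    exitRadius a R u - exitRadius a R (-u) = 2 * inner ℝ a u := by
  simp only [exitRadius, inner_neg_right, neg_sq]
  ring

theorem exitRadius_mul_exitRadius_neg (ha : ‖a‖ < R) (u : E) :
    exitRadius a R u * exitRadius a R (-u) = R ^ 2 - ‖a‖ ^ 2 := by
  have hsqrt := Real.sq_sqrt (add_nonneg (sq_nonneg (inner ℝ a u)) (sq_sub_norm_sq_pos ha).le)
  simp only [exitRadius, inner_neg_right, neg_sq]
  linear_combination hsqrt

theorem smul_mem_ball_iff_lt_exitRadius (ha : ‖a‖ < R) (hu : ‖u‖ = 1) {r : ℝ} (hr : 0 < r) :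
    r • u ∈ ball a R ↔ r < exitRadius a R u := by
  have hfactor : ‖r • u - a‖ ^ 2 - R ^ 2 =
      (r - exitRadius a R u) * (r + exitRadius a R (-u)) := by
    rw [norm_sub_sq_real, norm_smul, hu, inner_smul_left, real_inner_comm,
      Real.norm_of_nonneg hr.le, conj_trivial]
    linear_combination r * exitRadius_sub_exitRadius_neg a R u + exitRadius_mul_exitRadius_neg ha u
  rw [mem_ball, dist_eq_norm, ← sq_lt_sq₀ (norm_nonneg _) ((norm_nonneg a).trans ha.le), ← sub_neg,
    hfactor, mul_comm, ← smul_eq_mul, smul_neg_iff_of_pos_left (add_pos hr (exitRadius_pos ha _)),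
    sub_neg]

theorem le_exitRadius_of_ball_zero_subset_ball {ε : ℝ} (hε : 0 < ε) (hsub : ball 0 ε ⊆ ball a R)
    (hu : ‖u‖ = 1) : ε ≤ exitRadius a R u := by
  refine le_of_forall_lt fun r hr ↦ ?_
  have ha := norm_lt_of_ball_zero_subset_ball hε hsub
  rcases le_or_gt r 0 with hr0 | hr0
  · exact hr0.trans_lt (exitRadius_pos ha u)
  · refine (smul_mem_ball_iff_lt_exitRadius ha hu hr0).1 (hsub ?_)
    simpa [norm_smul, hu, abs_of_pos hr0] using hr

theorem exists_smoothHomogeneous_inv_exitRadius_pow (ha : ‖a‖ < R) (m : ℕ) :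
    ∃ q : E → ℝ, SmoothHomogeneous m q ∧ ∀ u, ‖u‖ = 1 →
      q u = (exitRadius a R u)⁻¹ ^ m + (-(exitRadius a R (-u))⁻¹) ^ m := by
  set c := R ^ 2 - ‖a‖ ^ 2
  have hprod (u : E) : (exitRadius a R u)⁻¹ * (exitRadius a R (-u))⁻¹ = c⁻¹ := by
    rw [← mul_inv, exitRadius_mul_exitRadius_neg ha]
  have hsum (u : E) : (exitRadius a R u)⁻¹ + -(exitRadius a R (-u))⁻¹ = -2 / c * inner ℝ a u := by
    rw [← sub_eq_add_neg, inv_sub_inv (exitRadius_pos ha u).ne' (exitRadius_pos ha (-u)).ne',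
      exitRadius_mul_exitRadius_neg ha, ← neg_sub, exitRadius_sub_exitRadius_neg]
    ring
  induction m using Nat.twoStepInduction with
  | zero => exact ⟨fun _ ↦ 2, .const 2, fun u _ ↦ by norm_num⟩
  | one =>
    exact ⟨fun z ↦ -2 / c * inner ℝ a z, (smoothHomogeneous_inner a).const_mul _, fun u _ ↦ by
      simp only [pow_one, hsum]⟩
  | more m ih₀ ih₁ =>
    obtain ⟨q₀, hq₀, hq₀u⟩ := ih₀
    obtain ⟨q₁, hq₁, hq₁u⟩ := ih₁
    refine ⟨fun z ↦ -2 / c * (inner ℝ a z * q₁ z) + c⁻¹ * (‖z‖ ^ 2 * q₀ z), ?_, fun u hu ↦ ?_⟩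
    · have h₁ := (smoothHomogeneous_inner a).mul hq₁
      have h₀ := smoothHomogeneous_norm_sq.mul hq₀
      rw [show 1 + (m + 1) = m + 2 by ring] at h₁
      rw [add_comm 2 m] at h₀
      exact (h₁.const_mul _).add (h₀.const_mul _)
    · simp only [hq₀u u hu, hq₁u u hu, hu, ← mul_assoc, ← hsum, ← hprod u]
      ring

/-- A primitive of `r ↦ r ^ (-1 - m)` on `(0, ∞)`, the radial profile of hypersingular kernels of
order `m` in polar coordinates. -/
def radialPrimitive (m : ℕ) (r : ℝ) : ℝ :=
  if m = 0 then Real.log r else -(r⁻¹ ^ m) / m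

theorem hasDerivAt_radialPrimitive (m : ℕ) {r : ℝ} (hr : 0 < r) :
    HasDerivAt (radialPrimitive m) (r ^ (-1 - m : ℤ)) r := by
  unfold radialPrimitive
  split_ifs with hm
  · simpa [hm] using Real.hasDerivAt_log hr.ne'
  · have hm' : (m : ℝ) ≠ 0 := by exact_mod_cast hm
    have hzpow : (fun x : ℝ ↦ -(x⁻¹ ^ m) / m) = fun x : ℝ ↦ -(x ^ (-m : ℤ)) / m := by
      simp only [zpow_neg, zpow_natCast, inv_pow]
    rw [hzpow]
    refine (((hasDerivAt_zpow (-m : ℤ) r (.inl hr.ne')).neg).div_const (m : ℝ)).congr_deriv ?_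
    rw [show (-1 - m : ℤ) = -m - 1 by ring]
    push_cast
    field_simp

theorem integral_Ico_zpow_eq_radialPrimitive_sub (m : ℕ) {ε ρ : ℝ} (hε : 0 < ε) (hερ : ε ≤ ρ) :
    ∫ r in Ico ε ρ, r ^ (-1 - m : ℤ) = radialPrimitive m ρ - radialPrimitive m ε := by
  have hpos : ∀ r ∈ uIcc ε ρ, 0 < r := fun r hr ↦ hε.trans_le (uIcc_of_le hερ ▸ hr).1
  rw [integral_Ico_eq_integral_Ioc, ← intervalIntegral.integral_of_le hερ]
  refine intervalIntegral.integral_eq_sub_of_hasDerivAt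
    (fun r hr ↦ hasDerivAt_radialPrimitive m (hpos r hr)) (ContinuousOn.intervalIntegrable ?_)
  exact fun r hr ↦ (continuousAt_zpow₀ r _ (.inl (hpos r hr).ne')).continuousWithinAt

theorem continuous_radialPrimitive_exitRadius (ha : ‖a‖ < R) (m : ℕ) :
    Continuous fun u ↦ radialPrimitive m (exitRadius a R u) :=
  continuous_iff_continuousAt.2 fun u ↦
    (hasDerivAt_radialPrimitive m (exitRadius_pos ha u)).continuousAt.comp
      continuous_exitRadius.continuousAt

theorem exists_smoothHomogeneous_radialPrimitive_exitRadius (ha : ‖a‖ < R) (m : ℕ) :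
    ∃ q : E → ℝ, SmoothHomogeneous m q ∧ ∀ u, ‖u‖ = 1 → q u = radialPrimitive m (exitRadius a R u) +
      (-1) ^ m * radialPrimitive m (exitRadius a R (-u)) := by
  rcases eq_or_ne m 0 with rfl | hm
  · refine ⟨fun _ ↦ Real.log (R ^ 2 - ‖a‖ ^ 2), .const _, fun u _ ↦ ?_⟩
    simp only [radialPrimitive, if_true, pow_zero, one_mul]
    rw [← Real.log_mul (exitRadius_pos ha u).ne' (exitRadius_pos ha (-u)).ne',
      exitRadius_mul_exitRadius_neg ha]
  · obtain ⟨q, hq, hqu⟩ := exists_smoothHomogeneous_inv_exitRadius_pow ha m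
    refine ⟨fun z ↦ -(m : ℝ)⁻¹ * q z, hq.const_mul _, fun u hu ↦ ?_⟩
    simp only [hqu u hu, radialPrimitive, if_neg hm, neg_pow (exitRadius a R (-u))⁻¹]
    ring

end ExitRadius

section BallIntegral

open Set Filter Topology Module

variable {E : Type*} [NormedAddCommGroup E] [InnerProductSpace ℝ E] [FiniteDimensional ℝ E]
  {K : E → ℝ} {m : ℕ} {a : E} {R ε : ℝ}

theorem integral_Ioi_pow_smul_indicator_ball_sdiff_ball [Nontrivial E]
    (hK : IsHomogeneousKernel (-m) K) (hε : 0 < ε) (hsub : ball 0 ε ⊆ ball a R) {u : E}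
    (hu : ‖u‖ = 1) :
    ∫ r in Ioi (0 : ℝ), r ^ (finrank ℝ E - 1) • (ball a R \ ball 0 ε).indicator K (r • u) =
      (radialPrimitive m (exitRadius a R u) - radialPrimitive m ε) * K u := by
  have ha := norm_lt_of_ball_zero_subset_ball hε hsub
  have hu0 : u ≠ 0 := norm_ne_zero_iff.1 (hu ▸ one_ne_zero)
  have hradial : EqOn
      (fun r : ℝ ↦ r ^ (finrank ℝ E - 1) • (ball a R \ ball 0 ε).indicator K (r • u))
      ((Ico ε (exitRadius a R u)).indicator fun r ↦ r ^ (-1 - m : ℤ) * K u) (Ioi 0) := by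
    intro r (hr : 0 < r)
    have hmem : r • u ∈ ball a R \ ball 0 ε ↔ r ∈ Ico ε (exitRadius a R u) := by
      rw [Set.mem_sdiff, smul_mem_ball_iff_lt_exitRadius ha hu hr, mem_ball_zero_iff, norm_smul, hu,
        mul_one, Real.norm_of_nonneg hr.le, not_lt, and_comm, mem_Ico]
    by_cases h : r ∈ Ico ε (exitRadius a R u)
    · simp only [indicator_of_mem h, indicator_of_mem (hmem.2 h), hK.map_smul_of_pos hr hu0,
        smul_eq_mul]
      rw [← mul_assoc, ← zpow_natCast, ← zpow_add₀ hr.ne', Nat.cast_pred finrank_pos]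
      congr 2
      ring
    · simp only [indicator_of_notMem h, indicator_of_notMem (hmem.not.2 h), smul_zero]
  have hIco : Ioi 0 ∩ Ico ε (exitRadius a R u) = Ico ε (exitRadius a R u) :=
    inter_eq_right.2 fun r hr ↦ hε.trans_le hr.1
  rw [setIntegral_congr_fun measurableSet_Ioi hradial, setIntegral_indicator measurableSet_Ico,
    hIco, integral_mul_const, integral_Ico_zpow_eq_radialPrimitive_sub m hε
      (le_exitRadius_of_ball_zero_subset_ball hε hsub hu)]

variable [MeasurableSpace E] [BorelSpace E]

theorem integrable_toSphere_radialPrimitive_exitRadius_mul (hK : ContinuousOn K {0}ᶜ)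
    (ha : ‖a‖ < R) (m : ℕ) : Integrable (fun θ : sphere (0 : E) 1 ↦
      radialPrimitive m (exitRadius a R θ) * K θ) (volume : Measure E).toSphere :=
  integrable_toSphere_of_continuousOn
    ((continuous_radialPrimitive_exitRadius ha m).continuousOn.mul hK)

theorem IsHypersingularKernel.integral_toSphere_radialPrimitive_exitRadius_mul
    (hK : IsHypersingularKernel m K) (ha : ‖a‖ < R) : ∫ θ : sphere (0 : E) 1,
      radialPrimitive m (exitRadius a R θ) * K θ ∂(volume : Measure E).toSphere = 0 := by
  obtain ⟨q, hq, hq_sphere⟩ := exists_smoothHomogeneous_radialPrimitive_exitRadius ha m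
  set g : E → ℝ := fun u ↦ radialPrimitive m (exitRadius a R u) * K u
  have hg : ContinuousOn g {0}ᶜ :=
    (continuous_radialPrimitive_exitRadius ha m).continuousOn.mul hK.continuousOn
  have hg_neg : ContinuousOn (fun u ↦ g (-u)) {0}ᶜ :=
    hg.comp continuous_neg.continuousOn fun u hu ↦ neg_ne_zero.2 hu
  have hpair (θ : sphere (0 : E) 1) : g θ + g (-θ) = K θ * q θ := by
    have hK_neg : K (-θ) = (-1) ^ m * K θ := by
      rw [hK.homogeneous.map_neg (ne_of_mem_sphere θ.2 one_ne_zero), zpow_neg, zpow_natCast,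
        ← inv_pow, inv_neg_one]
    simp only [g, hK_neg, hq_sphere θ (norm_eq_of_mem_sphere θ)]
    ring
  have hzero := hK.integral_sphere_mul q hq
  simp only [← hpair] at hzero
  rw [integral_add (integrable_toSphere_of_continuousOn hg)
    (integrable_toSphere_of_continuousOn hg_neg)] at hzero
  have hreflect := integral_toSphere_comp_neg (volume : Measure E)
    fun θ : sphere (0 : E) 1 ↦ g θ
  simp only [coe_neg_sphere] at hreflect
  linarith

theorem integrableOn_ball_sdiff_ball_of_continuousOn {F : Type*} [NormedAddCommGroup F] {g : E → F}
    (hg : ContinuousOn g {0}ᶜ) (hε : 0 < ε) : IntegrableOn g (ball a R \ ball 0 ε) :=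
  have hcompact : IsCompact (closedBall a R \ ball 0 ε) :=
    (isCompact_closedBall a R).diff isOpen_ball
  have hsub : closedBall a R \ ball 0 ε ⊆ {0}ᶜ := fun _ hz h0 ↦
    hz.2 (h0 ▸ mem_ball_self hε)
  ((hg.mono hsub).integrableOn_compact hcompact).mono_set
    (sdiff_subset_sdiff_left ball_subset_closedBall)

theorem IsHypersingularKernel.setIntegral_ball_sdiff_ball_eq_zero [Nontrivial E]
    (hK : IsHypersingularKernel m K) (hε : 0 < ε) (hsub : ball 0 ε ⊆ ball a R) :
    ∫ z in ball a R \ ball 0 ε, K z = 0 := by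
  have ha := norm_lt_of_ball_zero_subset_ball hε hsub
  have hε' : ‖(0 : E)‖ < ε := norm_zero.trans_lt hε
  have hmeas : MeasurableSet (ball a R \ ball 0 ε) := measurableSet_ball.diff measurableSet_ball
  rw [← integral_indicator hmeas, integral_eq_integral_toSphere_integral_Ioi volume
    ((integrableOn_ball_sdiff_ball_of_continuousOn hK.continuousOn hε).integrable_indicator hmeas)]
  calc ∫ θ : sphere (0 : E) 1, (∫ r in Ioi (0 : ℝ), r ^ (finrank ℝ E - 1) •
        (ball a R \ ball 0 ε).indicator K (r • (θ : E))) ∂(volume : Measure E).toSphere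
      = ∫ θ : sphere (0 : E) 1, (radialPrimitive m (exitRadius a R θ) * K θ -
          radialPrimitive m (exitRadius 0 ε (θ : E)) * K θ) ∂(volume : Measure E).toSphere := by
        simp only [integral_Ioi_pow_smul_indicator_ball_sdiff_ball hK.homogeneous hε hsub
          (norm_eq_of_mem_sphere _), exitRadius_zero_left hε.le, sub_mul]
    _ = 0 := by
        rw [integral_sub (integrable_toSphere_radialPrimitive_exitRadius_mul hK.continuousOn ha m)
          (integrable_toSphere_radialPrimitive_exitRadius_mul hK.continuousOn hε' m),
          hK.integral_toSphere_radialPrimitive_exitRadius_mul ha,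
          hK.integral_toSphere_radialPrimitive_exitRadius_mul hε', sub_zero]

end BallIntegral

section Taylor

variable {E F : Type*} [NormedAddCommGroup E] [NormedSpace ℝ E] [NormedAddCommGroup F]
  [NormedSpace ℝ F] {f : E → F} {x : E} {l : ℕ}

/-- The Taylor polynomial of order `l` of `f` at `x`, evaluated at `y`, for maps between normed
spaces. -/
def taylorSum (l : ℕ) (f : E → F) (x y : E) : F :=
  ∑ i ∈ Finset.range (l + 1), (i.factorial : ℝ)⁻¹ • iteratedFDeriv ℝ i f x fun _ ↦ y - x

theorem taylorSum_comp_add_right (l : ℕ) (f : E → F) (x a y : E) :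
    taylorSum l (fun z ↦ f (z + a)) x y = taylorSum l f (x + a) (y + a) := by
  simp only [taylorSum, iteratedFDeriv_comp_add_right, add_sub_add_right_eq_sub]

theorem taylorSum_eq_zero_of_notMem_tsupport (hx : x ∉ tsupport f) (l : ℕ) (y : E) :
    taylorSum l f x y = 0 :=
  Finset.sum_eq_zero fun i _ ↦ by
    rw [image_eq_zero_of_notMem_tsupport fun h ↦ hx (tsupport_iteratedFDeriv_subset i h),
      zero_apply, smul_zero]

theorem continuous_taylorSum (l : ℕ) (f : E → F) (x : E) : Continuous (taylorSum l f x) :=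
  continuous_finsetSum _ fun i _ ↦ ((iteratedFDeriv ℝ i f x).cont.comp
    (continuous_pi fun _ ↦ continuous_id.sub continuous_const)).const_smul _

theorem norm_sub_taylorSum_le [CompleteSpace F] (hf : ContDiff ℝ (l + 1) f) {C : ℝ}
    (hC : ∀ y, ‖iteratedFDeriv ℝ (l + 1) f y‖ ≤ C) (x y : E) :
    ‖f y - taylorSum l f x y‖ ≤ (l.factorial : ℝ)⁻¹ * (C * ‖y - x‖ ^ (l + 1)) := by
  have htaylor := map_add_eq_sum_add_integral_iteratedFDeriv (x := x) (y := y - x) (f := f) (n := l)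
    fun t _ ↦ hf.contDiffAt
  rw [add_sub_cancel] at htaylor
  rw [taylorSum, htaylor, add_sub_cancel_left, norm_smul, norm_inv, RCLike.norm_natCast]
  gcongr
  refine (intervalIntegral.norm_integral_le_of_norm_le_const (C := C * ‖y - x‖ ^ (l + 1))
    fun t ht ↦ ?_).trans_eq (by norm_num)
  rw [Set.uIoc_of_le zero_le_one] at ht
  have hweight : ‖(1 - t) ^ l‖ ≤ 1 := by
    rw [norm_pow, Real.norm_of_nonneg (sub_nonneg.2 ht.2)]
    exact pow_le_one₀ (sub_nonneg.2 ht.2) (sub_le_self _ ht.1.le)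
  calc ‖(1 - t) ^ l • iteratedFDeriv ℝ (l + 1) f (x + t • (y - x)) fun _ ↦ y - x‖
      ≤ 1 * (C * ‖y - x‖ ^ (l + 1)) := by
        rw [norm_smul]
        gcongr
        refine (ContinuousMultilinearMap.le_opNorm _ _).trans ?_
        simp only [Finset.prod_const, Finset.card_univ, Fintype.card_fin]
        gcongr
        exact hC _
    _ = C * ‖y - x‖ ^ (l + 1) := one_mul _

theorem exists_norm_sub_taylorSum_le [CompleteSpace F] (hf : ContDiff ℝ (l + 1) f)
    (hfc : HasCompactSupport f) :
    ∃ C, ∀ x y, ‖f y - taylorSum l f x y‖ ≤ C * ‖y - x‖ ^ (l + 1) := by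
  obtain ⟨C, hC⟩ := (hfc.iteratedFDeriv (𝕜 := ℝ) (l + 1)).exists_bound_of_continuous
    (hf.continuous_iteratedFDeriv (m := l + 1) (by simp))
  exact ⟨_, fun x y ↦ (norm_sub_taylorSum_le hf hC x y).trans_eq (mul_assoc _ _ _).symm⟩

end Taylor

section PrincipalValue

open Set Filter Topology Module

theorem tendsto_setIntegral_sdiff_ball {X F : Type*} [MetricSpace X]
    [MeasurableSpace X] [OpensMeasurableSpace X] [NormedAddCommGroup F] [NormedSpace ℝ F]
    {μ : Measure X} [NullSingletonClass μ]
    {g : X → F} {s : Set X} (hg : IntegrableOn g s μ) (x : X) :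
    Tendsto (fun ε : ℝ ↦ ∫ y in s \ ball x ε, g y ∂μ) (𝓝[>] 0) (𝓝 (∫ y in s, g y ∂μ)) := by
  simp only [sdiff_eq, ← setIntegral_indicator measurableSet_ball.compl]
  refine tendsto_integral_filter_of_dominated_convergence (fun y ↦ ‖g y‖)
    (.of_forall fun ε ↦ hg.aestronglyMeasurable.indicator measurableSet_ball.compl)
    (.of_forall fun ε ↦ .of_forall fun y ↦ norm_indicator_le_norm_self _ _) hg.norm ?_
  filter_upwards [ae_restrict_of_ae (Measure.ae_ne μ x)] with y hy
  refine tendsto_const_nhds.congr' ?_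
  filter_upwards [Ioo_mem_nhdsGT (dist_pos.2 hy)] with ε hε
  rw [indicator_of_mem]
  simpa using hε.2.le

variable {E : Type*} [NormedAddCommGroup E] [InnerProductSpace ℝ E] [FiniteDimensional ℝ E]
  [Nontrivial E] [MeasurableSpace E] [BorelSpace E] {K : E → ℝ} {l : ℕ}

theorem IsHomogeneousKernel.locallyIntegrable_mul (hK : IsHomogeneousKernel (-l) K)
    (hKc : ContinuousOn K {0}ᶜ) {g : E → ℝ} (hg : Continuous g) {C : ℝ}
    (hgC : ∀ z, ‖g z‖ ≤ C * ‖z‖ ^ (l + 1)) :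
    LocallyIntegrable (fun z ↦ K z * g z) (volume : Measure E) := by
  obtain ⟨B, hB, hKB⟩ := hK.exists_norm_le hKc
  have hne : ∀ᵐ z : E, z ≠ 0 := Measure.ae_ne volume 0
  refine locallyIntegrable_of_norm_le_rpow (C := B * C) (α := finrank ℝ E - 1) finrank_pos
    (sub_one_lt _) ?_ ?_
  · filter_upwards [hne] with z hz
    have hpow : ‖z‖ ^ (-(finrank ℝ E - 1 : ℝ)) =
        ‖z‖ ^ (-l - finrank ℝ E : ℤ) * ‖z‖ ^ (l + 1) := by
      rw [← zpow_natCast, ← zpow_add₀ (norm_ne_zero_iff.2 hz), ← Real.rpow_intCast]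
      congr 1
      push_cast
      ring
    rw [norm_mul, hpow, mul_mul_mul_comm]
    exact mul_le_mul (hKB z hz) (hgC z) (norm_nonneg _) (by positivity)
  · rw [← restrict_compl_singleton (μ := volume) (0 : E)]
    exact (hKc.mul hg.continuousOn).aestronglyMeasurable (measurableSet_singleton _).compl

namespace IsHypersingularKernel

variable {f : E → ℝ} {a : E} {R ε : ℝ}

theorem setIntegral_ball_sdiff_ball_mul_taylorSum_eq_zero (hK : IsHypersingularKernel l K)
    (f : E → ℝ) (hε : 0 < ε) (hsub : ball 0 ε ⊆ ball a R) :
    ∫ z in ball a R \ ball 0 ε, K z * taylorSum l f 0 z = 0 := by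
  have hterm : ∀ i ∈ Finset.range (l + 1), IsHypersingularKernel (l - i) fun z ↦
      K z * ((i.factorial : ℝ)⁻¹ * iteratedFDeriv ℝ i f 0 fun _ ↦ z) := fun i hi ↦ by
    rw [← Nat.sub_add_cancel (Finset.mem_range_succ_iff.1 hi)] at hK
    exact hK.mul ((SmoothHomogeneous.continuousMultilinearMap_diag _).const_mul _)
  simp only [taylorSum, smul_eq_mul, sub_zero, Finset.mul_sum]
  rw [integral_finsetSum _ fun i hi ↦
    integrableOn_ball_sdiff_ball_of_continuousOn (hterm i hi).continuousOn hε]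
  exact Finset.sum_eq_zero fun i hi ↦ (hterm i hi).setIntegral_ball_sdiff_ball_eq_zero hε hsub

theorem eventually_setIntegral_mul_taylorSum_eq_zero (hK : IsHypersingularKernel l K)
    (hsupp : tsupport f ⊆ ball a R) :
    ∀ᶠ ε in 𝓝[>] (0 : ℝ), ∫ z in ball a R \ ball 0 ε, K z * taylorSum l f 0 z = 0 := by
  by_cases h0 : (0 : E) ∈ ball a R
  · obtain ⟨δ, hδ, hsub⟩ := Metric.isOpen_iff.1 isOpen_ball 0 h0
    filter_upwards [Ioo_mem_nhdsGT hδ] with ε hε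
    exact hK.setIntegral_ball_sdiff_ball_mul_taylorSum_eq_zero f hε.1
      ((ball_subset_ball hε.2.le).trans hsub)
  · simp [taylorSum_eq_zero_of_notMem_tsupport fun h ↦ h0 (hsupp h)]

theorem tendsto_setIntegral_compl_ball_zero_mul (hK : IsHypersingularKernel l K)
    (hf : ContDiff ℝ (l + 1) f) (hsupp : tsupport f ⊆ ball a R) :
    Tendsto (fun ε ↦ ∫ z in (ball 0 ε)ᶜ, K z * f z) (𝓝[>] 0)
      (𝓝 (∫ z in ball a R, K z * (f z - taylorSum l f 0 z))) := by
  have hT := continuous_taylorSum l f 0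
  obtain ⟨C, hC⟩ := exists_norm_sub_taylorSum_le hf
    ((isCompact_closedBall a R).of_isClosed_subset (isClosed_tsupport f)
      (hsupp.trans ball_subset_closedBall))
  have hint : IntegrableOn (fun z ↦ K z * (f z - taylorSum l f 0 z)) (ball a R) :=
    ((hK.homogeneous.locallyIntegrable_mul hK.continuousOn (hf.continuous.sub hT)
      fun z ↦ by simpa using hC 0 z).integrableOn_isCompact
        (isCompact_closedBall a R)).mono_set ball_subset_closedBall
  refine (tendsto_setIntegral_sdiff_ball hint 0).congr' ?_
  filter_upwards [hK.eventually_setIntegral_mul_taylorSum_eq_zero hsupp, self_mem_nhdsWithin]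
    with ε hzero (hε : 0 < ε)
  have hintT : IntegrableOn (fun z ↦ K z * taylorSum l f 0 z) (ball a R \ ball 0 ε) :=
    integrableOn_ball_sdiff_ball_of_continuousOn (hK.continuousOn.mul hT.continuousOn) hε
  calc ∫ z in ball a R \ ball 0 ε, K z * (f z - taylorSum l f 0 z)
      = ∫ z in ball a R \ ball 0 ε, K z * f z := by
        rw [← add_zero (∫ z in _, _), ← hzero, ← integral_add (hint.mono_set sdiff_subset) hintT]
        simp only [← mul_add, sub_add_cancel]
    _ = ∫ z in (ball 0 ε)ᶜ, K z * f z :=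
        (setIntegral_eq_of_subset_of_forall_sdiff_eq_zero measurableSet_ball.compl
          (fun z hz ↦ hz.2) fun z hz ↦ by
            rw [image_eq_zero_of_notMem_tsupport fun h ↦ hz.2 ⟨hsupp h, hz.1⟩, mul_zero]).symm

theorem tendsto_setIntegral_compl_ball_mul (hK : IsHypersingularKernel l K)
    (hf : ContDiff ℝ (l + 1) f) {c : E} (hsupp : tsupport f ⊆ ball c R) (x : E) :
    Tendsto (fun ε ↦ ∫ y in (ball x ε)ᶜ, K (x - y) * f y) (𝓝[>] 0)
      (𝓝 (∫ y in ball c R, K (x - y) * (f y - taylorSum l f x y))) := by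
  have htranslate (g : E → ℝ) (s : Set E) :
      ∫ z in (· + x) ⁻¹' s, g (z + x) = ∫ y in s, g y :=
    (measurePreserving_add_right volume x).setIntegral_preimage_emb
      (MeasurableEquiv.addRight x).measurableEmbedding g s
  have hsupp' : tsupport (fun z ↦ f (z + x)) ⊆ ball (c - x) R := by
    rw [← preimage_add_right_ball]
    exact (tsupport_comp_eq_preimage f (Homeomorph.addRight x)).trans_subset (preimage_mono hsupp)
  have hlim := hK.comp_neg.tendsto_setIntegral_compl_ball_zero_mul
    (hf.comp (contDiff_id.add contDiff_const)) hsupp'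
  rw [← htranslate]
  refine .congr (fun ε ↦ htranslate _ _) ?_
  simpa only [preimage_compl, preimage_add_right_ball, sub_self, sub_add_cancel_right,
    Function.comp_def, id_eq, taylorSum_comp_add_right, zero_add] using hlim

end IsHypersingularKernel

end PrincipalValue

theorem contDiffOn_fundSol (n : ℕ) (m : WithTop ℕ∞) : ContDiffOn ℝ m (fundSol n) {0}ᶜ :=
  fun _ hz ↦ (contDiffAt_const.mul ((contDiffAt_norm ℝ hz).rpow_const_of_ne
    (norm_ne_zero_iff.2 hz))).contDiffWithinAt

theorem isHomogeneousKernel_fundSol (n : ℕ) : IsHomogeneousKernel 2 (fundSol n) := by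
  intro t ht z _
  have hpow : |t| ^ ((2 : ℝ) - n) = (|t| ^ n)⁻¹ * t ^ 2 := by
    rw [Real.rpow_sub (abs_pos.2 ht), Real.rpow_two, sq_abs, Real.rpow_natCast, inv_mul_eq_div]
  rw [fundSol, norm_smul, Real.norm_eq_abs, Real.mul_rpow (abs_nonneg t) (norm_nonneg z), hpow,
    finrank_euclideanSpace_fin, fundSol, zpow_ofNat]
  ring

theorem stmt_3_general {E : Type*} [NormedAddCommGroup E] [InnerProductSpace ℝ E]
    [FiniteDimensional ℝ E] [Nontrivial E] [MeasurableSpace E] [BorelSpace E] {Γ : E → ℝ} {s k : ℕ}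
    (hs : 1 ≤ s) (hsk : s ≤ k) (hΓ : IsHomogeneousKernel s Γ) (hΓ' : ContDiffOn ℝ k Γ {0}ᶜ)
    (v : Fin k → E) {f : E → ℝ} (hf : ContDiff ℝ (k - s + 1 : ℕ) f) {c : E} {R : ℝ}
    (hsupp : tsupport f ⊆ ball c R) (x : E) :
    Filter.Tendsto
      (fun ε : ℝ ↦ ∫ y in (ball x ε)ᶜ, iteratedFDeriv ℝ k (fun w ↦ Γ (w - y)) x v * f y)
      (nhdsWithin 0 (Set.Ioi 0))
      (nhds (∫ y in ball c R,
        iteratedFDeriv ℝ k (fun w ↦ Γ (w - y)) x v * (f y - taylorSum (k - s) f x y))) := by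
  simp only [iteratedFDeriv_comp_sub]
  have hK := IsHypersingularKernel.iteratedFDeriv_apply hs hsk hΓ hΓ' v
  exact hK.tendsto_setIntegral_compl_ball_mul (mod_cast hf) hsupp x

theorem stmt_3 (n k : ℕ) (hn : 3 ≤ n) (hk : 2 ≤ k) (v : Fin k → Fin n)
    (f : EuclideanSpace ℝ (Fin n) → ℝ) (hf : ContDiff ℝ (⊤ : ℕ∞) f)
    (hfc : HasCompactSupport f) (R : ℝ) (hR : 0 < R)
    (hsupp : tsupport f ⊆ ball (0 : EuclideanSpace ℝ (Fin n)) R)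
    (x : EuclideanSpace ℝ (Fin n)) :
    Filter.Tendsto
      (fun ε : ℝ => ∫ y in (ball x ε)ᶜ,
        (iteratedFDeriv ℝ k (fun w => fundSol n (w - y)) x fun i => ee (v i)) * f y)
      (nhdsWithin 0 (Set.Ioi 0))
      (nhds (∫ y in ball (0 : EuclideanSpace ℝ (Fin n)) R,
        (iteratedFDeriv ℝ k (fun w => fundSol n (w - y)) x fun i => ee (v i)) *
          (f y - taylorPoly n (k - 2) f x y))) := by
  have : Nonempty (Fin n) := ⟨⟨0, by lia⟩⟩
  exact stmt_3_general one_le_two hk (isHomogeneousKernel_fundSol n) (contDiffOn_fundSol n k)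
    (fun i ↦ ee (v i)) (contDiff_infty.1 hf _) hsupp x
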